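/- Variational lower bound for quantum relative entropy: for density operators ρ, σ with supp(ρ) ⊆ supp(σ) and any Hermitian operator H, D(ρ‖σ) ≥ Tr[Hρ] − ln Tr[e^H σ]. -/

import Mathlib

open Matrix
open scoped ComplexOrder

variable {d : Type*} [Fintype d] [DecidableEq d]

/-- Apply a real function to a Hermitian matrix via the spectral theorem
(junk value `0` for non-Hermitian matrices). -/
noncomputable def matFun (f : ℝ → ℝ) (A : Matrix d d ℂ) : Matrix d d ℂ :=
  if hA : A.IsHermitian then
    (hA.eigenvectorUnitary : Matrix d d ℂ) *
      Matrix.diagonal (fun i => (f (hA.eigenvalues i) : ℂ)) *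
      (star (hA.eigenvectorUnitary : Matrix d d ℂ))
  else 0

/-- Matrix logarithm (via spectral calculus, with `Real.log 0 = 0` on the kernel). -/
noncomputable def mlog (A : Matrix d d ℂ) : Matrix d d ℂ := matFun Real.log A

/-- Quantum (Umegaki) relative entropy `D(ρ‖σ) = Tr[ρ(log ρ − log σ)]`. -/
noncomputable def qRelEnt (ρ σ : Matrix d d ℂ) : ℝ :=
  (Matrix.trace (ρ * (mlog ρ - mlog σ))).re

/-- `ρ` is a density operator. -/
def IsDensity (ρ : Matrix d d ℂ) : Prop := ρ.PosSemidef ∧ Matrix.trace ρ = 1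

/-- `supp ρ ⊆ supp σ`, stated as `ker σ ⊆ ker ρ`. -/
def SuppLE (ρ σ : Matrix d d ℂ) : Prop := ∀ v : d → ℂ, σ.mulVec v = 0 → ρ.mulVec v = 0

/-- Matrix exponential via spectral calculus. -/
noncomputable def mexp (A : Matrix d d ℂ) : Matrix d d ℂ := matFun Real.exp A

/-!
The relative entropy has an integral representation through
`log x = ∫₀^∞ (x / (1 + x t) - 1 / (1 + t)) dt`, applied to the likelihood ratios `p i / q j` of the
eigenvalues of `ρ` and `σ`. At each `t` the contribution of the first term `x / (1 + x t)` is the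
maximum over all matrices `Y` of the concave quadratic form
`2 Re Tr[ρ Y] - Tr[Y σ Y†] - t Tr[ρ Y Y†]`, while the second term contributes a constant. Testing
with `Y = g (H)` for `g (h) = e ^ h / (1 + t e ^ h)` and integrating gives the linearised bound
`Tr[H ρ] + Tr ρ - Tr[e ^ H σ] ≤ D(ρ‖σ)`. Replacing `H` by `H + c` with
`c = (D(ρ‖σ) - Tr[H ρ]) / Tr ρ` leaves `Tr ρ ≤ e ^ c Tr[e ^ H σ]`, whose logarithm is the claim.
-/

open Filter Topology Unitary

section MatFun

variable {A B : Matrix d d ℂ}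

lemma matFun_of_isHermitian (hA : A.IsHermitian) (f : ℝ → ℝ) :
    matFun f A = conjStarAlgAut ℂ _ hA.eigenvectorUnitary
      (diagonal fun i ↦ (f (hA.eigenvalues i) : ℂ)) :=
  dif_pos hA

lemma matFun_id (hA : A.IsHermitian) : matFun id A = A :=
  (matFun_of_isHermitian hA id).trans hA.spectral_theorem.symm

lemma matFun_mul_matFun (hA : A.IsHermitian) (f g : ℝ → ℝ) :
    matFun f A * matFun g A = matFun (f * g) A := by
  simp [matFun_of_isHermitian hA, ← map_mul, -conjStarAlgAut_apply]

lemma matFun_add_const (hA : A.IsHermitian) (f : ℝ → ℝ) (c : ℝ) :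
    matFun (fun x ↦ f x + c) A = matFun f A + (c : ℂ) • 1 := by
  simp only [matFun_of_isHermitian hA, Complex.ofReal_add, ← diagonal_add, map_add,
    ← smul_one_eq_diagonal, map_smul, map_one]

lemma matFun_const_mul (hA : A.IsHermitian) (f : ℝ → ℝ) (c : ℝ) :
    matFun (fun x ↦ c * f x) A = (c : ℂ) • matFun f A := by
  simp only [matFun_of_isHermitian hA, ← map_smul, ← diagonal_smul, Complex.ofReal_mul]
  rfl

lemma isHermitian_matFun (hA : A.IsHermitian) (f : ℝ → ℝ) : (matFun f A).IsHermitian := by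
  rw [matFun_of_isHermitian hA, IsHermitian, ← star_eq_conjTranspose, ← map_star,
    star_eq_conjTranspose, diagonal_conjTranspose]
  congr 2
  ext i
  simp

/-- The matrix `⟨uᵢ, C vⱼ⟩` of `C` with respect to the eigenbasis `v` of `B` in the source and the
eigenbasis `u` of `A` in the target. It diagonalises left multiplication by functions of `A` and
right multiplication by functions of `B` simultaneously. -/
noncomputable def eigenbasisMatrix (hA : A.IsHermitian) (hB : B.IsHermitian) (C : Matrix d d ℂ) :
    Matrix d d ℂ :=
  star (hA.eigenvectorUnitary : Matrix d d ℂ) * C * hB.eigenvectorUnitary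

variable (hA : A.IsHermitian) (hB : B.IsHermitian)

lemma eigenbasisMatrix_matFun_mul (f : ℝ → ℝ) (C : Matrix d d ℂ) (i j : d) :
    eigenbasisMatrix hA hB (matFun f A * C) i j =
      f (hA.eigenvalues i) * eigenbasisMatrix hA hB C i j := by
  rw [← diagonal_mul (fun i ↦ (f (hA.eigenvalues i) : ℂ))]
  simp only [eigenbasisMatrix, matFun_of_isHermitian hA, conjStarAlgAut_apply, ← mul_assoc,
    coe_star_mul_self, one_mul]

lemma eigenbasisMatrix_mul_matFun (g : ℝ → ℝ) (C : Matrix d d ℂ) (i j : d) :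
    eigenbasisMatrix hA hB (C * matFun g B) i j =
      eigenbasisMatrix hA hB C i j * g (hB.eigenvalues j) := by
  rw [← mul_diagonal (d := fun j ↦ (g (hB.eigenvalues j) : ℂ))]
  simp only [eigenbasisMatrix, matFun_of_isHermitian hB, conjStarAlgAut_apply, mul_assoc,
    coe_star_mul_self, mul_one]

lemma eigenbasisMatrix_mul_left (C : Matrix d d ℂ) (i j : d) :
    eigenbasisMatrix hA hB (A * C) i j = hA.eigenvalues i * eigenbasisMatrix hA hB C i j := by
  simpa only [matFun_id hA, id] using eigenbasisMatrix_matFun_mul hA hB id C i j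

lemma eigenbasisMatrix_mul_right (C : Matrix d d ℂ) (i j : d) :
    eigenbasisMatrix hA hB (C * B) i j = eigenbasisMatrix hA hB C i j * hB.eigenvalues j := by
  simpa only [matFun_id hB, id] using eigenbasisMatrix_mul_matFun hA hB id C i j

lemma eigenbasisMatrix_mul_conjTranspose (C D : Matrix d d ℂ) :
    eigenbasisMatrix hA hB C * (eigenbasisMatrix hA hB D)ᴴ = eigenbasisMatrix hA hA (C * Dᴴ) := by
  simp only [eigenbasisMatrix, ← star_eq_conjTranspose, star_mul, star_star, mul_assoc]
  rw [← mul_assoc (hB.eigenvectorUnitary : Matrix d d ℂ),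
    mul_star_self_of_mem hB.eigenvectorUnitary.2, one_mul]

lemma trace_eigenbasisMatrix (C : Matrix d d ℂ) : trace (eigenbasisMatrix hA hA C) = trace C := by
  rw [eigenbasisMatrix, mul_assoc, trace_mul_comm, mul_assoc,
    mul_star_self_of_mem hA.eigenvectorUnitary.2, mul_one]

lemma trace_mul_conjTranspose_eq_sum (C D : Matrix d d ℂ) :
    trace (C * Dᴴ) =
      ∑ x : d × d, eigenbasisMatrix hA hB C x.1 x.2 * star (eigenbasisMatrix hA hB D x.1 x.2) := by
  rw [← trace_eigenbasisMatrix hA, ← eigenbasisMatrix_mul_conjTranspose hA hB,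
    Fintype.sum_prod_type]
  simp only [trace, diag_apply, mul_apply, conjTranspose_apply]

lemma re_trace_mul_mul_conjTranspose_eq_sum_left (C : Matrix d d ℂ) :
    (trace (A * C * Cᴴ)).re =
      ∑ x : d × d, hA.eigenvalues x.1 * Complex.normSq (eigenbasisMatrix hA hB C x.1 x.2) := by
  rw [trace_mul_conjTranspose_eq_sum hA hB, Complex.re_sum]
  simp only [eigenbasisMatrix_mul_left, mul_assoc, Complex.re_ofReal_mul, Complex.star_def,
    Complex.mul_conj, Complex.ofReal_re]

lemma re_trace_mul_mul_conjTranspose_eq_sum_right (C : Matrix d d ℂ) :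
    (trace (C * B * Cᴴ)).re =
      ∑ x : d × d, hB.eigenvalues x.2 * Complex.normSq (eigenbasisMatrix hA hB C x.1 x.2) := by
  rw [trace_mul_conjTranspose_eq_sum hA hB, Complex.re_sum]
  refine Finset.sum_congr rfl fun x _ ↦ ?_
  rw [eigenbasisMatrix_mul_right, mul_right_comm, Complex.star_def, Complex.mul_conj,
    Complex.re_mul_ofReal, Complex.ofReal_re, mul_comm]

lemma re_trace_matFun_mul (f : ℝ → ℝ) (C : Matrix d d ℂ) :
    (trace (matFun f A * C)).re =
      ∑ k, f (hA.eigenvalues k) * (eigenbasisMatrix hA hA C k k).re := by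
  rw [← trace_eigenbasisMatrix hA]
  simp only [trace, diag_apply, eigenbasisMatrix_matFun_mul, Complex.re_sum, Complex.re_ofReal_mul]

end MatFun

section NussbaumSzkola

variable {ρ σ : Matrix d d ℂ}

/-- The first of the two Nussbaum–Szkoła distributions of a pair of Hermitian matrices:
`(i, j) ↦ pᵢ |⟨uᵢ, vⱼ⟩|²`, where `ρ uᵢ = pᵢ uᵢ` and `σ vⱼ = qⱼ vⱼ`. The second one has weights
`qⱼ |⟨uᵢ, vⱼ⟩|²`, so the likelihood ratio of the pair is `pᵢ / qⱼ`. -/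
noncomputable def nussbaumSzkola (hρ : ρ.IsHermitian) (hσ : σ.IsHermitian) (x : d × d) : ℝ :=
  hρ.eigenvalues x.1 * Complex.normSq (eigenbasisMatrix hρ hσ 1 x.1 x.2)

lemma sum_nussbaumSzkola (hρ : ρ.IsHermitian) (hσ : σ.IsHermitian) :
    ∑ x, nussbaumSzkola hρ hσ x = (trace ρ).re := by
  simpa only [conjTranspose_one, mul_one] using!
    (re_trace_mul_mul_conjTranspose_eq_sum_left hρ hσ 1).symm

lemma eigenvalues_ne_zero_of_suppLE (hρ : ρ.IsHermitian) (hσ : σ.IsHermitian) (h : SuppLE ρ σ)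
    {i j : d} (hi : hρ.eigenvalues i ≠ 0) (hij : eigenbasisMatrix hρ hσ 1 i j ≠ 0) :
    hσ.eigenvalues j ≠ 0 := by
  intro hj
  have mulVec_eq_zero : ρ *ᵥ hσ.eigenvectorBasis j = 0 :=
    h _ (by rw [hσ.mulVec_eigenvectorBasis, hj, zero_smul])
  have entry_eq_zero : eigenbasisMatrix hρ hσ (ρ * 1) i j = 0 := by
    rw [mul_one, eigenbasisMatrix, mul_assoc, ← col_apply (_ * _), ← mulVec_single_one,
      ← mulVec_mulVec, ← mulVec_mulVec, hσ.eigenvectorUnitary_mulVec, mulVec_eq_zero, mulVec_zero,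
      Pi.zero_apply]
  rw [eigenbasisMatrix_mul_left] at entry_eq_zero
  exact mul_ne_zero (Complex.ofReal_ne_zero.2 hi) hij entry_eq_zero

lemma eigenvalues_ne_zero_of_nussbaumSzkola_ne_zero (hρ : ρ.IsHermitian) (hσ : σ.IsHermitian)
    (h : SuppLE ρ σ) {x : d × d} (hx : nussbaumSzkola hρ hσ x ≠ 0) :
    hρ.eigenvalues x.1 ≠ 0 ∧ hσ.eigenvalues x.2 ≠ 0 := by
  obtain ⟨hi, hij⟩ := mul_ne_zero_iff.1 hx
  exact ⟨hi, eigenvalues_ne_zero_of_suppLE hρ hσ h hi fun h0 ↦ hij (Complex.normSq_eq_zero.2 h0)⟩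

lemma qRelEnt_eq_sum_nussbaumSzkola (hρ : ρ.IsHermitian) (hσ : σ.IsHermitian) (h : SuppLE ρ σ) :
    qRelEnt ρ σ = ∑ x, nussbaumSzkola hρ hσ x *
      Real.log (hρ.eigenvalues x.1 / hσ.eigenvalues x.2) := by
  have entry (x : d × d) : eigenbasisMatrix hρ hσ (ρ * (mlog ρ - mlog σ)) x.1 x.2 =
      ((hρ.eigenvalues x.1 * (Real.log (hρ.eigenvalues x.1) - Real.log (hσ.eigenvalues x.2)) : ℝ) :
        ℂ) * eigenbasisMatrix hρ hσ 1 x.1 x.2 := by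
    have entry_sub : eigenbasisMatrix hρ hσ (mlog ρ - mlog σ) =
        eigenbasisMatrix hρ hσ (mlog ρ * 1) - eigenbasisMatrix hρ hσ (1 * mlog σ) := by
      simp only [eigenbasisMatrix, mul_one, one_mul, mul_sub, sub_mul]
    rw [eigenbasisMatrix_mul_left, entry_sub, Matrix.sub_apply, mlog, mlog,
      eigenbasisMatrix_matFun_mul, eigenbasisMatrix_mul_matFun]
    push_cast
    ring
  rw [qRelEnt, ← mul_one (ρ * _), ← conjTranspose_one, trace_mul_conjTranspose_eq_sum hρ hσ,
    Complex.re_sum]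
  refine Finset.sum_congr rfl fun x _ ↦ ?_
  rw [entry, mul_assoc, Complex.star_def, Complex.mul_conj, Complex.re_ofReal_mul,
    Complex.ofReal_re]
  rcases eq_or_ne (nussbaumSzkola hρ hσ x) 0 with hx | hx
  · rw [hx, zero_mul, mul_right_comm]
    exact mul_eq_zero_of_left hx _
  · obtain ⟨hi, hj⟩ := eigenvalues_ne_zero_of_nussbaumSzkola_ne_zero hρ hσ h hx
    rw [Real.log_div hi hj, nussbaumSzkola]
    ring

lemma two_mul_re_mul_star_sub_le {p q t : ℝ} (hp : 0 ≤ p) (hq : 0 ≤ q) (ht : 0 ≤ t) {m z : ℂ}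
    (h : p ≠ 0 → m ≠ 0 → q ≠ 0) :
    2 * (p * (z * star m).re) - q * Complex.normSq z - t * (p * Complex.normSq z) ≤
      p * Complex.normSq m * (p / q / (1 + p / q * t)) := by
  rcases hq.eq_or_lt with rfl | hq
  · have cross_eq_zero : p * (z * star m).re = 0 := by
      rcases eq_or_ne p 0 with rfl | hp0
      · rw [zero_mul]
      · rw [not_ne_iff.1 fun hm ↦ h hp0 hm rfl, star_zero, mul_zero, Complex.zero_re, mul_zero]
    have := mul_nonneg ht (mul_nonneg hp (Complex.normSq_nonneg z))
    simpa only [cross_eq_zero, mul_zero, zero_mul, sub_zero, zero_sub, div_zero, zero_div,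
      neg_nonpos] using this
  · have ratio_eq : p / q / (1 + p / q * t) = p / (q + t * p) := by field_simp
    rw [ratio_eq, ← mul_div_assoc, le_div_iff₀ (by positivity)]
    simp only [Complex.normSq_apply, Complex.mul_re, Complex.star_def, Complex.conj_re,
      Complex.conj_im]
    linarith [sq_nonneg ((q + t * p) * z.re - p * m.re),
      sq_nonneg ((q + t * p) * z.im - p * m.im)]

lemma two_mul_re_trace_sub_le_sum_nussbaumSzkola (hρ : ρ.PosSemidef) (hσ : σ.PosSemidef)
    (h : SuppLE ρ σ) {t : ℝ} (ht : 0 ≤ t) (Y : Matrix d d ℂ) :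
    2 * (trace (ρ * Y)).re - (trace (Y * σ * Yᴴ)).re - t * (trace (ρ * Y * Yᴴ)).re ≤
      ∑ x, nussbaumSzkola hρ.isHermitian hσ.isHermitian x *
        (hρ.isHermitian.eigenvalues x.1 / hσ.isHermitian.eigenvalues x.2 /
          (1 + hρ.isHermitian.eigenvalues x.1 / hσ.isHermitian.eigenvalues x.2 * t)) := by
  have trace_mul_eq : (trace (ρ * Y)).re = ∑ x : d × d, hρ.isHermitian.eigenvalues x.1 *
      (eigenbasisMatrix hρ.isHermitian hσ.isHermitian Y x.1 x.2 *
        star (eigenbasisMatrix hρ.isHermitian hσ.isHermitian 1 x.1 x.2)).re := by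
    have trace_eq_sum :=
      trace_mul_conjTranspose_eq_sum hρ.isHermitian hσ.isHermitian (ρ * Y) 1
    rw [conjTranspose_one, mul_one] at trace_eq_sum
    simp only [trace_eq_sum, eigenbasisMatrix_mul_left, mul_assoc, Complex.re_sum,
      Complex.re_ofReal_mul]
  rw [trace_mul_eq, re_trace_mul_mul_conjTranspose_eq_sum_left hρ.isHermitian hσ.isHermitian,
    re_trace_mul_mul_conjTranspose_eq_sum_right hρ.isHermitian hσ.isHermitian]
  simp only [Finset.mul_sum, ← Finset.sum_sub_distrib]
  exact Finset.sum_le_sum fun x _ ↦ two_mul_re_mul_star_sub_le (hρ.eigenvalues_nonneg _)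
    (hσ.eigenvalues_nonneg _) ht (eigenvalues_ne_zero_of_suppLE _ _ h)

end NussbaumSzkola

section LogCutoff

/-- The truncation at `T` of the integral `log x = ∫₀^∞ (x / (1 + x t) - 1 / (1 + t)) dt`, in closed
form. -/
noncomputable def logCutoff (x T : ℝ) : ℝ := Real.log (1 + x * T) - Real.log (1 + T)

@[simp]
lemma logCutoff_zero (x : ℝ) : logCutoff x 0 = 0 := by simp [logCutoff]

lemma hasDerivAt_one_add_mul (x t : ℝ) : HasDerivAt (fun T ↦ 1 + x * T) x t := by
  simpa using ((hasDerivAt_id t).const_mul x).const_add 1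

lemma hasDerivAt_logCutoff {x t : ℝ} (hx : 0 ≤ x) (ht : 0 ≤ t) :
    HasDerivAt (logCutoff x) (x / (1 + x * t) - 1 / (1 + t)) t := by
  have hasDerivAt_log {y : ℝ} (hy : 0 ≤ y) :
      HasDerivAt (fun T ↦ Real.log (1 + y * T)) (y / (1 + y * t)) t :=
    (hasDerivAt_one_add_mul y t).log (by positivity)
  simpa only [one_mul] using! (hasDerivAt_log hx).sub (hasDerivAt_log zero_le_one)

lemma tendsto_logCutoff {x : ℝ} (hx : 0 < x) :
    Tendsto (logCutoff x) atTop (𝓝 (Real.log x)) := by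
  have tendsto_ratio : Tendsto (fun T : ℝ ↦ (T⁻¹ + x) / (T⁻¹ + 1)) atTop (𝓝 x) := by
    simpa using! (tendsto_inv_atTop_zero.add_const x).div
      (tendsto_inv_atTop_zero.add_const (1 : ℝ)) (by norm_num)
  refine (tendsto_ratio.log hx.ne').congr' ?_
  filter_upwards [eventually_gt_atTop 0] with T hT
  rw [logCutoff, ← Real.log_div (by positivity) (by positivity)]
  congr 1
  field_simp

lemma tendsto_inv_one_add_mul_atTop {x : ℝ} (hx : 0 < x) :
    Tendsto (fun T ↦ (1 + x * T)⁻¹) atTop (𝓝 0) :=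
  (tendsto_atTop_add_const_left _ 1 (tendsto_id.const_mul_atTop hx)).inv_tendsto_atTop

lemma le_of_tendsto_of_hasDerivAt_le {f g f' g' : ℝ → ℝ} {a l m : ℝ}
    (hf : ∀ t ≥ a, HasDerivAt f (f' t) t) (hg : ∀ t ≥ a, HasDerivAt g (g' t) t)
    (ha : f a ≤ g a) (hle : ∀ t ≥ a, f' t ≤ g' t)
    (hfl : Tendsto f atTop (𝓝 l)) (hgm : Tendsto g atTop (𝓝 m)) : l ≤ m := by
  refine le_of_tendsto_of_tendsto hfl hgm ?_
  filter_upwards [eventually_ge_atTop a] with T hT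
  exact image_le_of_deriv_right_le_deriv_boundary
    (fun t ht ↦ (hf t ht.1).continuousAt.continuousWithinAt)
    (fun t ht ↦ (hf t ht.1).hasDerivWithinAt) ha
    (fun t ht ↦ (hg t ht.1).continuousAt.continuousWithinAt)
    (fun t ht ↦ (hg t ht.1).hasDerivWithinAt) (fun t ht ↦ hle t ht.1) ⟨hT, le_rfl⟩

/-- The closed form of `∫₀^T (2 P g - g² (Q + t P) - P / (1 + t)) dt` with `g = y / (1 + y t)`. -/
noncomputable def testCutoff (P Q y T : ℝ) : ℝ :=
  P * logCutoff y T + (P - Q * y) * (1 - (1 + y * T)⁻¹)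

@[simp]
lemma testCutoff_zero (P Q y : ℝ) : testCutoff P Q y 0 = 0 := by simp [testCutoff]

lemma hasDerivAt_testCutoff (P Q : ℝ) {y t : ℝ} (hy : 0 ≤ y) (ht : 0 ≤ t) :
    HasDerivAt (testCutoff P Q y)
      (2 * P * (y / (1 + y * t)) - (y / (1 + y * t)) ^ 2 * (Q + t * P) - P * (1 / (1 + t))) t := by
  have hpos : 1 + y * t ≠ 0 := by positivity
  refine (((hasDerivAt_logCutoff hy ht).const_mul P).add
    ((((hasDerivAt_one_add_mul y t).fun_inv hpos).const_sub 1).const_mul (P - Q * y))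
    ).congr_deriv ?_
  field_simp
  ring

lemma tendsto_testCutoff (P Q : ℝ) {y : ℝ} (hy : 0 < y) :
    Tendsto (testCutoff P Q y) atTop (𝓝 (P * Real.log y + (P - Q * y))) := by
  simpa only [sub_zero, mul_one] using! ((tendsto_logCutoff hy).const_mul P).add
    (((tendsto_inv_one_add_mul_atTop hy).const_sub 1).const_mul (P - Q * y))

lemma sum_mul_log_add_sub_le_sum_mul_log {ι κ : Type*} [Fintype ι] [Fintype κ] {w r : ι → ℝ}
    {P Q y : κ → ℝ} (hwr : ∀ i, w i ≠ 0 → 0 < r i) (hy : ∀ k, 0 < y k)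
    (hPw : ∑ k, P k = ∑ i, w i)
    (hle : ∀ t : ℝ, 0 ≤ t →
      ∑ k, (2 * P k * (y k / (1 + y k * t)) - (y k / (1 + y k * t)) ^ 2 * (Q k + t * P k)) ≤
        ∑ i, w i * (r i / (1 + r i * t))) :
    ∑ k, (P k * Real.log (y k) + (P k - Q k * y k)) ≤ ∑ i, w i * Real.log (r i) := by
  refine le_of_tendsto_of_hasDerivAt_le (a := 0)
    (f := fun T ↦ ∑ k, testCutoff (P k) (Q k) (y k) T) (g := fun T ↦ ∑ i, w i * logCutoff (r i) T)
    (fun t ht ↦ .fun_sum fun k _ ↦ hasDerivAt_testCutoff _ _ (hy k).le ht)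
    (fun t ht ↦ .fun_sum (A' := fun i ↦ w i * (r i / (1 + r i * t) - 1 / (1 + t))) fun i _ ↦ ?_)
    (by simp) (fun t ht ↦ ?_) (tendsto_finsetSum _ fun k _ ↦ tendsto_testCutoff _ _ (hy k))
    (tendsto_finsetSum _ fun i _ ↦ ?_)
  · rcases eq_or_ne (w i) 0 with hi | hi
    · simpa only [hi, zero_mul] using hasDerivAt_const t (0 : ℝ)
    · exact (hasDerivAt_logCutoff (hwr i hi).le ht).const_mul _
  · simpa only [mul_sub, Finset.sum_sub_distrib, ← Finset.sum_mul, hPw, sub_le_sub_iff_right]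
      using hle t ht
  · rcases eq_or_ne (w i) 0 with hi | hi
    · simp [hi]
    · exact (tendsto_logCutoff (hwr i hi)).const_mul _

end LogCutoff

section VariationalBound

variable {ρ σ H : Matrix d d ℂ}

lemma sum_two_mul_sub_eq_re_trace (hH : H.IsHermitian) (f : ℝ → ℝ) (t : ℝ) :
    ∑ k, (2 * (eigenbasisMatrix hH hH ρ k k).re * f (hH.eigenvalues k) -
      f (hH.eigenvalues k) ^ 2 *
        ((eigenbasisMatrix hH hH σ k k).re + t * (eigenbasisMatrix hH hH ρ k k).re)) =
      2 * (trace (ρ * matFun f H)).re - (trace (matFun f H * σ * (matFun f H)ᴴ)).re -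
        t * (trace (ρ * matFun f H * (matFun f H)ᴴ)).re := by
  rw [(isHermitian_matFun hH f).eq, trace_mul_comm ρ, trace_mul_comm _ (matFun f H), ← mul_assoc,
    mul_assoc ρ, trace_mul_comm ρ, matFun_mul_matFun hH]
  simp only [re_trace_matFun_mul hH, Finset.mul_sum, ← Finset.sum_sub_distrib, Pi.mul_apply]
  exact Finset.sum_congr rfl fun k _ ↦ by ring

theorem re_trace_matFun_mul_add_sub_le_qRelEnt (hρ : ρ.PosSemidef) (hσ : σ.PosSemidef)
    (hsupp : SuppLE ρ σ) (hH : H.IsHermitian) (f : ℝ → ℝ) :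
    (trace (matFun f H * ρ)).re + (trace ρ).re - (trace (matFun (Real.exp ∘ f) H * σ)).re ≤
      qRelEnt ρ σ := by
  have sum_diag : ∑ k, (eigenbasisMatrix hH hH ρ k k).re = (trace ρ).re := by
    rw [← trace_eigenbasisMatrix hH, trace, Complex.re_sum]
    rfl
  have sum_le := sum_mul_log_add_sub_le_sum_mul_log
    (w := nussbaumSzkola hρ.isHermitian hσ.isHermitian)
    (r := fun x ↦ hρ.isHermitian.eigenvalues x.1 / hσ.isHermitian.eigenvalues x.2)
    (P := fun k ↦ (eigenbasisMatrix hH hH ρ k k).re)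
    (Q := fun k ↦ (eigenbasisMatrix hH hH σ k k).re)
    (y := fun k ↦ Real.exp (f (hH.eigenvalues k)))
    (fun x hx ↦ by
      obtain ⟨hi, hj⟩ := eigenvalues_ne_zero_of_nussbaumSzkola_ne_zero _ _ hsupp hx
      exact div_pos ((hρ.eigenvalues_nonneg _).lt_of_ne' hi)
        ((hσ.eigenvalues_nonneg _).lt_of_ne' hj))
    (fun k ↦ Real.exp_pos _)
    (sum_diag.trans (sum_nussbaumSzkola _ _).symm)
    (fun t ht ↦ (sum_two_mul_sub_eq_re_trace hH
      (fun x ↦ Real.exp (f x) / (1 + Real.exp (f x) * t)) t).trans_le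
      (two_mul_re_trace_sub_le_sum_nussbaumSzkola hρ hσ hsupp ht _))
  rw [qRelEnt_eq_sum_nussbaumSzkola hρ.isHermitian hσ.isHermitian hsupp,
    re_trace_matFun_mul hH, re_trace_matFun_mul hH, ← sum_diag, ← Finset.sum_add_distrib,
    ← Finset.sum_sub_distrib]
  refine le_of_eq_of_le (Finset.sum_congr rfl fun k _ ↦ ?_) sum_le
  rw [Real.log_exp, Function.comp_apply]
  ring

lemma re_trace_mul_add_sub_exp_mul_le_qRelEnt (hρ : ρ.PosSemidef) (hσ : σ.PosSemidef)
    (hsupp : SuppLE ρ σ) (hH : H.IsHermitian) (c : ℝ) :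
    (trace (H * ρ)).re + (1 + c) * (trace ρ).re - Real.exp c * (trace (mexp H * σ)).re ≤
      qRelEnt ρ σ := by
  have exp_comp_add : (Real.exp ∘ fun x ↦ id x + c) = fun x ↦ Real.exp c * Real.exp x :=
    funext fun x ↦ (Real.exp_add x c).trans (mul_comm _ _)
  have bound := re_trace_matFun_mul_add_sub_le_qRelEnt hρ hσ hsupp hH fun x ↦ id x + c
  rw [exp_comp_add, matFun_add_const hH, matFun_const_mul hH, matFun_id hH, ← mexp, add_mul,
    smul_mul_assoc, smul_mul_assoc, one_mul, trace_add, trace_smul, trace_smul, Complex.add_re,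
    smul_eq_mul, smul_eq_mul, Complex.re_ofReal_mul, Complex.re_ofReal_mul] at bound
  linarith

theorem qRelEnt_variational_lower_bound_general (hρ : ρ.PosSemidef) (hρ₀ : ρ ≠ 0)
    (hσ : σ.PosSemidef) (hsupp : SuppLE ρ σ) (hH : H.IsHermitian) :
    (trace (H * ρ)).re -
      (trace ρ).re * (Real.log (trace (mexp H * σ)).re - Real.log (trace ρ).re) ≤ qRelEnt ρ σ := by
  have trace_pos : 0 < (trace ρ).re :=
    (Complex.pos_iff.1 (hρ.trace_nonneg.lt_of_ne' (hρ.trace_eq_zero_iff.not.2 hρ₀))).1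
  set c := (qRelEnt ρ σ - (trace (H * ρ)).re) / (trace ρ).re
  have trace_mul_c : (trace ρ).re * c = qRelEnt ρ σ - (trace (H * ρ)).re :=
    mul_div_cancel₀ _ trace_pos.ne'
  have trace_le : (trace ρ).re ≤ Real.exp c * (trace (mexp H * σ)).re := by
    linarith [re_trace_mul_add_sub_exp_mul_le_qRelEnt hρ hσ hsupp hH c]
  have partition_pos : 0 < (trace (mexp H * σ)).re :=
    pos_of_mul_pos_right (trace_pos.trans_le trace_le) (Real.exp_pos c).le
  have log_le := Real.log_le_log trace_pos trace_le
  rw [Real.log_mul (Real.exp_pos c).ne' partition_pos.ne', Real.log_exp] at log_le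
  linarith [mul_le_mul_of_nonneg_left log_le trace_pos.le]

end VariationalBound

/-- Variational (Donsker–Varadhan / Gibbs) lower bound for the quantum
relative entropy: for density operators `ρ, σ` with `supp ρ ⊆ supp σ` and any Hermitian `H`,
`D(ρ‖σ) ≥ Tr[H ρ] − ln Tr[e^H σ]`. -/
theorem qRelEnt_variational_lower_bound
    (ρ σ H : Matrix d d ℂ)
    (hρ : IsDensity ρ) (hσ : IsDensity σ) (hsupp : SuppLE ρ σ)
    (hH : H.IsHermitian) :
    (Matrix.trace (H * ρ)).re - Real.log ((Matrix.trace (mexp H * σ)).re) ≤ qRelEnt ρ σ := by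
  obtain ⟨hρ_pos, hρ_trace⟩ := hρ
  have hρ_ne : ρ ≠ 0 := by
    rintro rfl
    simp at hρ_trace
  simpa [hρ_trace] using qRelEnt_variational_lower_bound_general hρ_pos hρ_ne hσ.1 hsupp hH
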